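/- Let H be a nonzero complex Hilbert space, let φ : B(H) → B(H) be a surjective *-homomorphism, and let S ∈ B(H) be an isometry such that φ(x) S = S x for all x ∈ B(H). Then S is a unitary. -/

import Mathlib

open ContinuousLinearMap

noncomputable section

/-- if `H ≠ 0`, `φ` is a surjective `*`-homomorphism of `B(H)` and `S` is an
isometry with `φ x * S = S * x` for all `x`, then `S` is a unitary. -/
theorem intertwining_isometry_of_surjective_star_hom_is_unitary
    {H : Type*} [NormedAddCommGroup H] [InnerProductSpace ℂ H] [CompleteSpace H] [Nontrivial H]
    (φ : (H →L[ℂ] H) →ₗ[ℂ] (H →L[ℂ] H))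
    (hφ_mul : ∀ x y : H →L[ℂ] H, φ (x * y) = φ x * φ y)
    (hφ_star : ∀ x : H →L[ℂ] H, φ (star x) = star (φ x))
    (hφ_surj : Function.Surjective φ)
    (S : H →L[ℂ] H)
    (hS_iso : ContinuousLinearMap.adjoint S * S = 1)
    (hint : ∀ x : H →L[ℂ] H, φ x * S = S * x) :
    S * ContinuousLinearMap.adjoint S = 1 := by
  have hSS : ∀ a : H, ContinuousLinearMap.adjoint S (S a) = a := fun a =>
    congrArg (fun T : H →L[ℂ] H => T a) hS_iso
  obtain ⟨v, hv⟩ := exists_ne (0 : H)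
  have hw : S v ≠ 0 := by
    intro h
    apply hv
    rw [← hSS v, h, map_zero]
  obtain ⟨f, hf⟩ := SeparatingDual.exists_eq_one (R := ℂ) hw
  -- `S` is surjective: hit `S v` with a rank-one operator sending it to `u`
  ext u
  obtain ⟨x, hx⟩ := hφ_surj (f.smulRight u)
  have hu : S (x v) = u := by
    have h : φ x (S v) = S (x v) := congrArg (fun T : H →L[ℂ] H => T v) (hint x)
    rw [← h, hx]
    simp [hf]
  change S (ContinuousLinearMap.adjoint S u) = u
  rw [← hu, hSS]

end
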